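/- (Third-order topic moment, Lemma on exact moments of the LDA model, M3 part.) Let k, d ≥ 1, α ∈ ℝ^k with α_i > 0, α_0 := Σ_i α_i, and μ ∈ ℝ^{d×k} with columns μ_1, …, μ_k. Write m_a := E_α[(μx̄)_a]. Then for all coordinates a, b, c ∈ {1,…,d}: ((α_0+1)(α_0+2)/2)·E_α[(μx̄)_a (μx̄)_b (μx̄)_c] − (α_0(α_0+1)/2)·( E_α[(μx̄)_a (μx̄)_b]·m_c + E_α[(μx̄)_a (μx̄)_c]·m_b + E_α[(μx̄)_b (μx̄)_c]·m_a ) + α_0²·m_a m_b m_c = Σ_{i=1}^k (α_i/α_0) μ_{a,i} μ_{b,i} μ_{c,i}. That is, the centered third-order moment tensor of μh under h ∼ Dirichlet(α) equals Σ_{i=1}^k (α_i/α_0) μ_i ⊗ μ_i ⊗ μ_i. -/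

import Mathlib

/-!
The raw moments of `h ∼ Dirichlet(α)` are computed by size-biasing. Since `h_i · w_α(h) = w_{α+e_i}(h)`
on the simplex, `E_α[h_i g(h)] = (Z(α + e_i) / Z(α)) · E_{α+e_i}[g(h)]`, where `Z(α)` is the total
mass of the weight. The ratio of masses is `α_i / α₀` by Dirichlet's integral
`Z(α) = ∏ Γ(α_i) / Γ(α₀)` (`integral_dirW`), so iterating `Ealpha_coord_mul` and using linearity
gives the mixed moments of one, two and three linear forms of `h` as explicit rational expressions in
the weighted sums `∑ u_i α_i`, `∑ u_i v_i α_i`, `∑ u_i v_i w_i α_i` and in `α₀`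
(`Ealpha_linear`, `Ealpha_linear₂`, `Ealpha_linear₃`). Substituting them, everything but
the last sum cancels.

Dirichlet's integral is proved with values in `[0, ∞]`, where no integrability has to be known in
advance: by Tonelli, `∏ Γ(α_i) = ∫ ∏ y_i^(α_i-1) e^(-y_i) dy` over the positive
orthant; the last coordinate is replaced by `s = ∑ y_i` and the others are rescaled by `s`, which splits the integral
as `Γ(α₀) · Z(α)`. Finiteness and positivity of `Z(α)`, hence integrability of the weight, follow.
-/

open MeasureTheory

noncomputable section

/-- The simplex `T_k ⊆ ℝ^{k-1}`: nonnegative coordinates summing to at most 1. -/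
def Tset (k : ℕ) : Set (Fin (k - 1) → ℝ) :=
  {x | (∀ i, 0 ≤ x i) ∧ ∑ i, x i ≤ 1}

/-- The completed vector `x̄ ∈ ℝ^k`: first `k-1` coordinates are those of `x`,
the last coordinate is `1 - Σ x_i`. -/
def bar (k : ℕ) (x : Fin (k - 1) → ℝ) : Fin k → ℝ :=
  fun i => if h : (i : ℕ) < k - 1 then x ⟨i, h⟩ else 1 - ∑ j, x j

/-- The Dirichlet weight `w_α(x) = ∏ x̄_i^{α_i - 1}`. -/
def dirW (k : ℕ) (α : Fin k → ℝ) (x : Fin (k - 1) → ℝ) : ℝ :=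
  ∏ i, bar k x i ^ (α i - 1)

/-- Expectation of `g(x̄)` under the Dirichlet(α) distribution. -/
def Ealpha (k : ℕ) (α : Fin k → ℝ) (g : (Fin k → ℝ) → ℝ) : ℝ :=
  (∫ x in Tset k, g (bar k x) * dirW k α x) / ∫ x in Tset k, dirW k α x

/-! ### Dirichlet's integral -/

/-- The one-dimensional Dirichlet factor `t ↦ t^(a-1)` on `[0, ∞)`, extended by `0`. The endpoint
is included so that products of such factors agree with `dirW` on the whole closed simplex. -/
def powFun (a t : ℝ) : ENNReal :=
  (Set.Ici (0 : ℝ)).indicator (fun t => ENNReal.ofReal (t ^ (a - 1))) t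

@[fun_prop]
lemma measurable_powFun (a : ℝ) : Measurable (powFun a) := by
  unfold powFun
  exact Measurable.indicator (by fun_prop) measurableSet_Ici

lemma powFun_mul (a : ℝ) {s : ℝ} (hs : 0 < s) (t : ℝ) :
    powFun a (s * t) = ENNReal.ofReal (s ^ (a - 1)) * powFun a t := by
  unfold powFun
  by_cases ht : 0 ≤ t
  · rw [Set.indicator_of_mem (by exact mul_nonneg hs.le ht), Set.indicator_of_mem (by exact ht),
      Real.mul_rpow hs.le ht, ENNReal.ofReal_mul (by positivity)]
  · rw [Set.indicator_of_notMem, Set.indicator_of_notMem (by exact ht), mul_zero]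
    simp only [Set.mem_Ici, not_le] at ht ⊢
    exact mul_neg_of_pos_of_neg hs ht

lemma lintegral_powFun_mul_exp {a : ℝ} (ha : 0 < a) :
    ∫⁻ t, powFun a t * ENNReal.ofReal (Real.exp (-t)) = ENNReal.ofReal (Real.Gamma a) := by
  have h1 : ∀ t, powFun a t * ENNReal.ofReal (Real.exp (-t)) =
      (Set.Ici (0 : ℝ)).indicator
        (fun t => ENNReal.ofReal (Real.exp (-t) * t ^ (a - 1))) t := by
    intro t
    by_cases ht : 0 ≤ t
    · rw [powFun, Set.indicator_of_mem (by exact ht), Set.indicator_of_mem (by exact ht),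
        mul_comm, ENNReal.ofReal_mul (by positivity)]
    · rw [powFun, Set.indicator_of_notMem (by exact ht), Set.indicator_of_notMem (by exact ht),
        zero_mul]
  simp_rw [h1]
  rw [lintegral_indicator measurableSet_Ici, ← setLIntegral_congr Ioi_ae_eq_Ici,
    Real.Gamma_eq_integral ha,
    ofReal_integral_eq_lintegral_ofReal (Real.GammaIntegral_convergent ha)]
  filter_upwards [ae_restrict_mem measurableSet_Ioi] with t ht
  have : (0 : ℝ) < t := ht
  positivity

lemma lintegral_pi_prod (n : ℕ) (f : Fin n → ℝ → ENNReal) (hf : ∀ i, Measurable (f i)) :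
    ∫⁻ y : Fin n → ℝ, ∏ i, f i (y i) = ∏ i, ∫⁻ t, f i t := by
  induction n with
  | zero =>
    simp only [Finset.univ_eq_empty, Finset.prod_empty, lintegral_const, one_mul]
    rw [volume_pi, Measure.pi_of_empty (x := 0), measure_univ]
  | succ n ih =>
    have e := (volume_preserving_piFinSuccAbove (fun _ : Fin (n + 1) => ℝ) 0).symm
    rw [← e.lintegral_comp_emb (MeasurableEquiv.measurableEmbedding _), Fin.prod_univ_succ,
      ← ih (fun i => f i.succ) (fun i => hf _), Measure.volume_eq_prod,
      ← lintegral_prod_mul (hf 0).aemeasurable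
        (Finset.measurable_prod _ fun i _ =>
          (hf i.succ).comp (measurable_pi_apply i)).aemeasurable]
    refine lintegral_congr fun z => ?_
    simp [Fin.prod_univ_succ, MeasurableEquiv.piFinSuccAbove]

lemma lintegral_smul_fin (n : ℕ) (F : (Fin n → ℝ) → ENNReal) (hF : Measurable F)
    {s : ℝ} (hs : 0 < s) :
    ∫⁻ y, F y = ENNReal.ofReal (s ^ n) * ∫⁻ x, F (s • x) := by
  rw [← lintegral_map hF (measurable_const_smul s), Measure.map_addHaar_smul _ hs.ne',
    lintegral_smul_measure, smul_eq_mul, ← mul_assoc, ← ENNReal.ofReal_mul (by positivity),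
    Module.finrank_fin_fun, abs_of_pos (by positivity), mul_inv_cancel₀ (by positivity)]
  simp

/-- The unnormalised Dirichlet density on the dilated simplex `{y ≥ 0, ∑ y ≤ s}`, extended
by `0`; at `s = 1` it is the Dirichlet weight. -/
def dirFun (n : ℕ) (α : Fin (n + 1) → ℝ) (s : ℝ) (y : Fin n → ℝ) : ENNReal :=
  (∏ i : Fin n, powFun (α i.castSucc) (y i)) * powFun (α (Fin.last n)) (s - ∑ i, y i)

@[fun_prop]
lemma measurable_dirFun (n : ℕ) (α : Fin (n + 1) → ℝ) :
    Measurable (fun p : ℝ × (Fin n → ℝ) => dirFun n α p.1 p.2) := by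
  unfold dirFun
  fun_prop

lemma dirFun_of_neg (n : ℕ) (α : Fin (n + 1) → ℝ) {s : ℝ} (hs : s < 0) (y : Fin n → ℝ) :
    dirFun n α s y = 0 := by
  unfold dirFun
  by_cases h : ∀ i, 0 ≤ y i
  · have : s - ∑ i, y i < 0 := by
      have := Finset.sum_nonneg fun i (_ : i ∈ Finset.univ) => h i
      linarith
    rw [powFun.eq_def (α (Fin.last n)), Set.indicator_of_notMem (by simpa using this), mul_zero]
  · push Not at h
    obtain ⟨i, hi⟩ := h
    rw [Finset.prod_eq_zero (Finset.mem_univ i), zero_mul]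
    rw [powFun, Set.indicator_of_notMem (by simpa using hi)]

/-- Homogeneity: dilating the simplex by `s` scales the total mass by `s^(α₀ - 1)`. -/
lemma lintegral_dirFun (n : ℕ) (α : Fin (n + 1) → ℝ) {s : ℝ} (hs : 0 < s) :
    ∫⁻ y, dirFun n α s y =
      ENNReal.ofReal (s ^ ((∑ i, α i) - 1)) * ∫⁻ y, dirFun n α 1 y := by
  have hm : ∀ s, Measurable (dirFun n α s) := fun s =>
    (measurable_dirFun n α).comp (by fun_prop : Measurable fun y : Fin n → ℝ => (s, y))
  rw [lintegral_smul_fin n _ (hm s) hs]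
  have h1 : ∀ x, dirFun n α s (s • x) =
      ENNReal.ofReal (∏ i, s ^ (α i - 1)) * dirFun n α 1 x := by
    intro x
    have h2 : s - ∑ i, (s • x) i = s * (1 - ∑ i, x i) := by
      simp [mul_sub, Finset.mul_sum]
    rw [dirFun, h2, powFun_mul _ hs]
    simp only [Pi.smul_apply, smul_eq_mul, powFun_mul _ hs, Finset.prod_mul_distrib]
    rw [Fin.prod_univ_castSucc, ENNReal.ofReal_mul (by positivity),
      ENNReal.ofReal_prod_of_nonneg (fun i _ => by positivity), dirFun]
    ring
  simp_rw [h1]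
  rw [lintegral_const_mul _ (hm 1), ← mul_assoc, ← ENNReal.ofReal_mul (by positivity),
    ← Real.rpow_sum_of_pos hs, ← Real.rpow_natCast, ← Real.rpow_add hs]
  congr 3
  simp [Finset.sum_sub_distrib]
  ring

/-- Dirichlet's integral `Γ(α₀) · Z(α) = ∏ Γ(α_i)`, obtained by evaluating
`∫ ∏ y_i^(α_i - 1) exp(-y_i)` in the coordinates `s = ∑ y_i` and `x = y / s`. -/
lemma Gamma_mul_lintegral_dirFun (n : ℕ) (α : Fin (n + 1) → ℝ) (hα : ∀ i, 0 < α i) :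
    ENNReal.ofReal (Real.Gamma (∑ i, α i)) * ∫⁻ y, dirFun n α 1 y =
      ∏ i, ENNReal.ofReal (Real.Gamma (α i)) := by
  have h0 : 0 < ∑ i, α i := Finset.sum_pos (fun i _ => hα i) Finset.univ_nonempty
  have hmE : Measurable fun s : ℝ => ENNReal.ofReal (Real.exp (-s)) := by fun_prop
  have hm : ∀ s, Measurable (dirFun n α s) := fun s =>
    (measurable_dirFun n α).comp (by fun_prop : Measurable fun y : Fin n → ℝ => (s, y))
  symm
  calc ∏ i, ENNReal.ofReal (Real.Gamma (α i))
      = (∏ i : Fin n, ∫⁻ t, powFun (α i.castSucc) t * ENNReal.ofReal (Real.exp (-t))) *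
          ∫⁻ t, powFun (α (Fin.last n)) t * ENNReal.ofReal (Real.exp (-t)) := by
        simp_rw [lintegral_powFun_mul_exp (hα _)]
        rw [Fin.prod_univ_castSucc]
    _ = ∫⁻ y : Fin n → ℝ, ∫⁻ s, dirFun n α s y * ENNReal.ofReal (Real.exp (-s)) := by
        rw [← lintegral_pi_prod n
            (fun i t => powFun (α i.castSucc) t * ENNReal.ofReal (Real.exp (-t)))
            fun i => (measurable_powFun _).mul hmE,
          ← lintegral_mul_const _ (by fun_prop)]
        refine lintegral_congr fun y => ?_
        -- translate the last variable: `t = s - ∑ y`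
        rw [← lintegral_sub_right_eq_self _ (∑ i, y i), ← lintegral_const_mul _ (by fun_prop)]
        refine lintegral_congr fun s => ?_
        have hexp : Real.exp (-s) =
            (∏ i, Real.exp (-(y i))) * Real.exp (-(s - ∑ i, y i)) := by
          rw [← Real.exp_sum, ← Real.exp_add, Finset.sum_neg_distrib]
          ring_nf
        rw [hexp, ENNReal.ofReal_mul (by positivity),
          ENNReal.ofReal_prod_of_nonneg (fun i _ => by positivity), Finset.prod_mul_distrib, dirFun]
        ring
    _ = ∫⁻ s, ∫⁻ y : Fin n → ℝ, dirFun n α s y * ENNReal.ofReal (Real.exp (-s)) := by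
        refine lintegral_lintegral_swap (Measurable.aemeasurable ?_)
        exact ((measurable_dirFun n α).comp measurable_swap).mul (hmE.comp measurable_snd)
    _ = ∫⁻ s, powFun (∑ i, α i) s * ENNReal.ofReal (Real.exp (-s)) *
          ∫⁻ y, dirFun n α 1 y := by
        -- the two integrands agree except possibly at `s = 0`
        have hne : ∀ᵐ s : ℝ, s ≠ 0 := by simp [ae_iff]
        refine lintegral_congr_ae ?_
        filter_upwards [hne] with s hs
        rw [lintegral_mul_const _ (hm s)]
        rcases lt_or_gt_of_ne hs with h | h
        · simp [dirFun_of_neg n α h, powFun, h]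
        · rw [lintegral_dirFun n α h, powFun, Set.indicator_of_mem (by exact h.le)]
          ring
    _ = _ := by
        rw [lintegral_mul_const _ (by fun_prop), lintegral_powFun_mul_exp h0]

lemma indicator_dirW_eq (n : ℕ) (α : Fin (n + 1) → ℝ) (x : Fin n → ℝ) :
    (Tset (n + 1)).indicator (fun x => ENNReal.ofReal (dirW (n + 1) α x)) x = dirFun n α 1 x := by
  have hsplit : ∀ x : Fin n → ℝ, dirW (n + 1) α x =
      (∏ i : Fin n, x i ^ (α i.castSucc - 1)) * (1 - ∑ i, x i) ^ (α (Fin.last n) - 1) := by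
    intro x
    rw [dirW, Fin.prod_univ_castSucc]
    simp [bar]
  by_cases hx : (∀ i, 0 ≤ x i) ∧ ∑ i, x i ≤ 1
  · have h1 : 0 ≤ 1 - ∑ i, x i := by linarith [hx.2]
    rw [Set.indicator_of_mem (by exact hx), hsplit, ENNReal.ofReal_mul
      (Finset.prod_nonneg fun i _ => Real.rpow_nonneg (hx.1 i) _),
      ENNReal.ofReal_prod_of_nonneg (fun i _ => Real.rpow_nonneg (hx.1 i) _), dirFun]
    congr 1
    · refine Finset.prod_congr rfl fun i _ => ?_
      rw [powFun, Set.indicator_of_mem (by exact hx.1 i)]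
    · rw [powFun, Set.indicator_of_mem (by exact h1)]
  · rw [Set.indicator_of_notMem (by exact hx), dirFun]
    by_cases h : ∀ i, 0 ≤ x i
    · have : 1 < ∑ i, x i := by
        by_contra h2
        exact hx ⟨h, not_lt.1 h2⟩
      rw [powFun.eq_def (α (Fin.last n)), Set.indicator_of_notMem (by simpa using this), mul_zero]
    · push Not at h
      obtain ⟨i, hi⟩ := h
      rw [Finset.prod_eq_zero (Finset.mem_univ i), zero_mul]
      rw [powFun, Set.indicator_of_notMem (by simpa using hi)]

/-! ### The Dirichlet weight on the simplex -/

lemma continuous_bar (k : ℕ) : Continuous (bar k) := by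
  refine continuous_pi fun i => ?_
  unfold bar
  split_ifs <;> fun_prop

lemma isCompact_Tset (k : ℕ) : IsCompact (Tset k) := by
  refine (isCompact_Icc (a := (0 : Fin (k - 1) → ℝ)) (b := 1)).of_isClosed_subset ?_ ?_
  · have : Tset k = (⋂ i, {x | 0 ≤ x i}) ∩ {x | ∑ i, x i ≤ 1} := by
      ext x; simp [Tset]
    rw [this]
    exact (isClosed_iInter fun i => isClosed_le continuous_const (continuous_apply i)).inter
      (isClosed_le (by fun_prop) continuous_const)
  · rintro x ⟨h0, h1⟩
    exact ⟨h0, fun i => (Finset.single_le_sum (fun j _ => h0 j) (Finset.mem_univ i)).trans h1⟩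

lemma bar_nonneg {k : ℕ} {x : Fin (k - 1) → ℝ} (hx : x ∈ Tset k) (i : Fin k) :
    0 ≤ bar k x i := by
  unfold bar
  split_ifs with h
  · exact hx.1 _
  · linarith [hx.2]

lemma dirW_nonneg {k : ℕ} (α : Fin k → ℝ) {x : Fin (k - 1) → ℝ} (hx : x ∈ Tset k) :
    0 ≤ dirW k α x :=
  Finset.prod_nonneg fun i _ => Real.rpow_nonneg (bar_nonneg hx i) _

lemma measurable_dirW (k : ℕ) (α : Fin k → ℝ) : Measurable (dirW k α) := by
  have := fun i => (measurable_pi_apply i).comp (continuous_bar k).measurable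
  unfold dirW
  exact Finset.measurable_prod _ fun i _ => (this i).pow_const _

lemma setLIntegral_dirW (k : ℕ) (hk : 1 ≤ k) (α : Fin k → ℝ) (hα : ∀ i, 0 < α i) :
    ∫⁻ x in Tset k, ENNReal.ofReal (dirW k α x) =
      ENNReal.ofReal ((∏ i, Real.Gamma (α i)) / Real.Gamma (∑ i, α i)) := by
  obtain ⟨n, rfl⟩ : ∃ n, k = n + 1 := ⟨k - 1, by omega⟩
  have h0 : 0 < Real.Gamma (∑ i, α i) :=
    Real.Gamma_pos_of_pos (Finset.sum_pos (fun i _ => hα i) Finset.univ_nonempty)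
  have h := Gamma_mul_lintegral_dirFun n α hα
  rw [← lintegral_indicator (isCompact_Tset _).measurableSet,
    ENNReal.ofReal_div_of_pos h0, ENNReal.ofReal_prod_of_nonneg
      (fun i _ => (Real.Gamma_pos_of_pos (hα i)).le), ← h,
    ENNReal.eq_div_iff (by simpa using h0) (by simp)]
  congr 1
  exact lintegral_congr fun x => indicator_dirW_eq n α x

lemma integrableOn_dirW (k : ℕ) (hk : 1 ≤ k) (α : Fin k → ℝ) (hα : ∀ i, 0 < α i) :
    IntegrableOn (dirW k α) (Tset k) := by
  refine ⟨(measurable_dirW k α).aestronglyMeasurable, ?_⟩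
  rw [hasFiniteIntegral_iff_ofReal, setLIntegral_dirW k hk α hα]
  · exact ENNReal.ofReal_lt_top
  · filter_upwards [ae_restrict_mem (isCompact_Tset k).measurableSet] with x hx
      using dirW_nonneg α hx

/-- The Dirichlet normalising constant is the multivariate beta function. -/
lemma integral_dirW (k : ℕ) (hk : 1 ≤ k) (α : Fin k → ℝ) (hα : ∀ i, 0 < α i) :
    ∫ x in Tset k, dirW k α x = (∏ i, Real.Gamma (α i)) / Real.Gamma (∑ i, α i) := by
  rw [integral_eq_lintegral_of_nonneg_ae _ (measurable_dirW k α).aestronglyMeasurable,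
    setLIntegral_dirW k hk α hα, ENNReal.toReal_ofReal]
  · exact div_nonneg (Finset.prod_nonneg fun i _ => (Real.Gamma_pos_of_pos (hα i)).le)
      (Real.Gamma_nonneg_of_nonneg (Finset.sum_nonneg fun i _ => (hα i).le))
  · filter_upwards [ae_restrict_mem (isCompact_Tset k).measurableSet] with x hx
      using dirW_nonneg α hx

lemma integral_dirW_ne_zero (k : ℕ) (hk : 1 ≤ k) (α : Fin k → ℝ) (hα : ∀ i, 0 < α i) :
    ∫ x in Tset k, dirW k α x ≠ 0 := by
  have : Nonempty (Fin k) := ⟨⟨0, hk⟩⟩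
  rw [integral_dirW k hk α hα]
  exact div_ne_zero (Finset.prod_ne_zero_iff.2 fun i _ => (Real.Gamma_pos_of_pos (hα i)).ne')
    (Real.Gamma_pos_of_pos (Finset.sum_pos (fun i _ => hα i) Finset.univ_nonempty)).ne'

/-! ### Size-biasing and moments of linear forms -/

/-- The parameter `α + e_i`. -/
def bump {k : ℕ} (α : Fin k → ℝ) (i : Fin k) : Fin k → ℝ :=
  fun j => α j + if j = i then 1 else 0

lemma bump_pos {k : ℕ} {α : Fin k → ℝ} (hα : ∀ i, 0 < α i) (i j : Fin k) :
    0 < bump α i j := by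
  have := hα j
  unfold bump
  split_ifs <;> linarith

lemma sum_bump {k : ℕ} (α : Fin k → ℝ) (i : Fin k) : ∑ j, bump α i j = (∑ j, α j) + 1 := by
  simp [bump, Finset.sum_add_distrib]

lemma dirW_bump {k : ℕ} {α : Fin k → ℝ} (hα : ∀ i, 0 < α i) (i : Fin k)
    {x : Fin (k - 1) → ℝ} (hx : x ∈ Tset k) :
    dirW k (bump α i) x = bar k x i * dirW k α x := by
  unfold dirW
  rw [← Finset.mul_prod_erase _ _ (Finset.mem_univ i),
    ← Finset.mul_prod_erase _ (fun j => bar k x j ^ (α j - 1)) (Finset.mem_univ i), ← mul_assoc]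
  congr 1
  · have h : bump α i i - 1 = (α i - 1) + 1 := by simp [bump]
    -- `α i ≠ 0` keeps the identity valid on the face `bar k x i = 0`
    rw [h, Real.rpow_add_one' (bar_nonneg hx i) (by simpa using (hα i).ne'), mul_comm]
  · refine Finset.prod_congr rfl fun j hj => ?_
    simp [bump, Finset.ne_of_mem_erase hj]

lemma integral_dirW_bump (k : ℕ) (hk : 1 ≤ k) (α : Fin k → ℝ) (hα : ∀ i, 0 < α i) (i : Fin k) :
    ∫ x in Tset k, dirW k (bump α i) x =
      α i / (∑ j, α j) * ∫ x in Tset k, dirW k α x := by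
  have : Nonempty (Fin k) := ⟨⟨0, hk⟩⟩
  have h0 : 0 < ∑ i, α i := Finset.sum_pos (fun i _ => hα i) Finset.univ_nonempty
  have hG := (Real.Gamma_pos_of_pos h0).ne'
  rw [integral_dirW k hk _ (bump_pos hα i), integral_dirW k hk α hα, sum_bump,
    Real.Gamma_add_one h0.ne']
  have h : ∏ j, Real.Gamma (bump α i j) = α i * ∏ j, Real.Gamma (α j) := by
    rw [← Finset.mul_prod_erase _ _ (Finset.mem_univ i),
      ← Finset.mul_prod_erase _ (fun j => Real.Gamma (α j)) (Finset.mem_univ i), ← mul_assoc]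
    congr 1
    · simp [bump, Real.Gamma_add_one (hα i).ne']
    · refine Finset.prod_congr rfl fun j hj => ?_
      simp [bump, Finset.ne_of_mem_erase hj]
  rw [h]
  field_simp

/-- Size-biasing: `E_α[h_i g(h)] = (α_i / α₀) E_{α + e_i}[g(h)]`. -/
lemma Ealpha_coord_mul (k : ℕ) (hk : 1 ≤ k) (α : Fin k → ℝ) (hα : ∀ i, 0 < α i) (i : Fin k)
    (g : (Fin k → ℝ) → ℝ) :
    Ealpha k α (fun h => h i * g h) = α i / (∑ j, α j) * Ealpha k (bump α i) g := by
  have hZ := integral_dirW_ne_zero k hk _ (bump_pos hα i)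
  have h1 : ∫ x in Tset k, bar k x i * g (bar k x) * dirW k α x =
      ∫ x in Tset k, g (bar k x) * dirW k (bump α i) x := by
    refine setIntegral_congr_fun (isCompact_Tset k).measurableSet fun x hx => ?_
    simp only [dirW_bump hα i hx]
    ring
  simp only [Ealpha]
  rw [h1]
  rw [integral_dirW_bump k hk α hα i] at hZ ⊢
  have hZ1 := left_ne_zero_of_mul hZ
  have hZ2 := right_ne_zero_of_mul hZ
  generalize α i / ∑ j, α j = r at *
  field_simp

/-- Linearity in one linear factor, combined with size-biasing. -/
lemma Ealpha_linear_mul (k : ℕ) (hk : 1 ≤ k) (α : Fin k → ℝ) (hα : ∀ i, 0 < α i)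
    (u : Fin k → ℝ) (g : (Fin k → ℝ) → ℝ) (hg : Continuous g) :
    Ealpha k α (fun h => (∑ i, u i * h i) * g h) =
      ∑ i, u i * (α i / (∑ j, α j) * Ealpha k (bump α i) g) := by
  simp_rw [← Ealpha_coord_mul k hk α hα]
  simp only [Ealpha]
  have hint : ∀ i, IntegrableOn (fun x => u i * (bar k x i * g (bar k x) * dirW k α x))
      (Tset k) := fun i => by
    have hb := continuous_bar k
    refine Integrable.const_mul ?_ (u i)
    exact IntegrableOn.continuousOn_mul (g := fun x => bar k x i * g (bar k x))
      (by fun_prop) (integrableOn_dirW k hk α hα) (isCompact_Tset k)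
  simp_rw [← mul_div_assoc]
  rw [← Finset.sum_div]
  congr 1
  simp_rw [← integral_const_mul]
  rw [← integral_finsetSum _ fun i _ => hint i]
  refine integral_congr_ae (Filter.Eventually.of_forall fun x => ?_)
  simp only [Finset.sum_mul]
  exact Finset.sum_congr rfl fun i _ => by ring

lemma Ealpha_one (k : ℕ) (hk : 1 ≤ k) (α : Fin k → ℝ) (hα : ∀ i, 0 < α i) :
    Ealpha k α (fun _ => 1) = 1 := by
  simp only [Ealpha, one_mul]
  exact div_self (integral_dirW_ne_zero k hk α hα)

lemma sum_mul_bump {k : ℕ} (α u : Fin k → ℝ) (i : Fin k) :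
    ∑ j, u j * bump α i j = (∑ j, u j * α j) + u i := by
  simp [bump, mul_add, Finset.sum_add_distrib]

lemma Ealpha_linear (k : ℕ) (hk : 1 ≤ k) (α : Fin k → ℝ) (hα : ∀ i, 0 < α i)
    (u : Fin k → ℝ) :
    Ealpha k α (fun h => ∑ i, u i * h i) = (∑ i, u i * α i) / ∑ i, α i := by
  have h := Ealpha_linear_mul k hk α hα u (fun _ => 1) continuous_const
  simp only [mul_one, Ealpha_one k hk _ (bump_pos hα _)] at h
  rw [h, Finset.sum_div]
  exact Finset.sum_congr rfl fun i _ => by ring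

lemma Ealpha_linear₂ (k : ℕ) (hk : 1 ≤ k) (α : Fin k → ℝ) (hα : ∀ i, 0 < α i)
    (u v : Fin k → ℝ) :
    Ealpha k α (fun h => (∑ i, u i * h i) * (∑ i, v i * h i)) =
      ((∑ i, u i * α i) * (∑ i, v i * α i) + ∑ i, u i * v i * α i) /
        ((∑ i, α i) * ((∑ i, α i) + 1)) := by
  rw [Ealpha_linear_mul k hk α hα u (fun h => ∑ i, v i * h i) (by fun_prop)]
  simp_rw [Ealpha_linear k hk _ (bump_pos hα _), sum_bump, sum_mul_bump]
  rw [Finset.sum_mul, ← Finset.sum_add_distrib, Finset.sum_div]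
  refine Finset.sum_congr rfl fun i _ => ?_
  simp only [div_eq_mul_inv, mul_inv]
  ring

lemma Ealpha_linear₃ (k : ℕ) (hk : 1 ≤ k) (α : Fin k → ℝ) (hα : ∀ i, 0 < α i)
    (u v w : Fin k → ℝ) :
    Ealpha k α (fun h => (∑ i, u i * h i) * (∑ i, v i * h i) * (∑ i, w i * h i)) =
      ((∑ i, u i * α i) * (∑ i, v i * α i) * (∑ i, w i * α i) +
        (∑ i, u i * v i * α i) * (∑ i, w i * α i) +
        (∑ i, u i * w i * α i) * (∑ i, v i * α i) +
        (∑ i, v i * w i * α i) * (∑ i, u i * α i) +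
        2 * ∑ i, u i * v i * w i * α i) /
        ((∑ i, α i) * ((∑ i, α i) + 1) * ((∑ i, α i) + 2)) := by
  simp_rw [mul_assoc (∑ i, u i * (_ : ℝ))]
  rw [Ealpha_linear_mul k hk α hα u (fun h => (∑ i, v i * h i) * ∑ i, w i * h i) (by fun_prop)]
  simp_rw [Ealpha_linear₂ k hk _ (bump_pos hα _), sum_bump, sum_mul_bump]
  set A := ∑ i, α i
  set V := ∑ i, v i * α i
  set W := ∑ i, w i * α i
  set X := ∑ i, v i * w i * α i
  have key : ∑ i, u i * α i * ((V + v i) * (W + w i) + (X + v i * w i)) =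
      (∑ i, u i * α i) * (V * W) + (∑ i, u i * v i * α i) * W + (∑ i, u i * w i * α i) * V +
        X * (∑ i, u i * α i) + 2 * ∑ i, u i * v i * w i * α i := by
    simp only [Finset.mul_sum, Finset.sum_mul, ← Finset.sum_add_distrib]
    exact Finset.sum_congr rfl fun i _ => by ring
  rw [← key, Finset.sum_div]
  refine Finset.sum_congr rfl fun i _ => ?_
  rw [show A + 1 + 1 = A + 2 by ring]
  simp only [div_eq_mul_inv, mul_inv]
  ring

/-- Third-order LDA topic moment: the centered third moment tensor of `μh` under
`h ∼ Dirichlet(α)` equals `Σ_i (α_i/α_0) μ_i ⊗ μ_i ⊗ μ_i`, entrywise. -/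
theorem lda_third_moment (k d : ℕ) (hk : 1 ≤ k) (hd : 1 ≤ d)
    (α : Fin k → ℝ) (hα : ∀ i, 0 < α i)
    (μ : Matrix (Fin d) (Fin k) ℝ) (a b c : Fin d) :
    (((∑ i, α i) + 1) * ((∑ i, α i) + 2) / 2) *
        Ealpha k α
          (fun h => (∑ i, μ a i * h i) * (∑ i, μ b i * h i) * (∑ i, μ c i * h i)) -
      ((∑ i, α i) * ((∑ i, α i) + 1) / 2) *
        (Ealpha k α (fun h => (∑ i, μ a i * h i) * (∑ i, μ b i * h i)) *
            Ealpha k α (fun h => ∑ i, μ c i * h i) +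
          Ealpha k α (fun h => (∑ i, μ a i * h i) * (∑ i, μ c i * h i)) *
            Ealpha k α (fun h => ∑ i, μ b i * h i) +
          Ealpha k α (fun h => (∑ i, μ b i * h i) * (∑ i, μ c i * h i)) *
            Ealpha k α (fun h => ∑ i, μ a i * h i)) +
      (∑ i, α i) ^ 2 * (Ealpha k α (fun h => ∑ i, μ a i * h i) *
          Ealpha k α (fun h => ∑ i, μ b i * h i) *
          Ealpha k α (fun h => ∑ i, μ c i * h i)) =
      ∑ i, (α i / ∑ j, α j) * μ a i * μ b i * μ c i := by
  have : Nonempty (Fin k) := ⟨⟨0, hk⟩⟩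
  have hA : 0 < ∑ i, α i := Finset.sum_pos (fun i _ => hα i) Finset.univ_nonempty
  rw [Ealpha_linear₃ k hk α hα (μ a) (μ b) (μ c), Ealpha_linear₂ k hk α hα (μ a) (μ b),
    Ealpha_linear₂ k hk α hα (μ a) (μ c), Ealpha_linear₂ k hk α hα (μ b) (μ c),
    Ealpha_linear k hk α hα (μ a), Ealpha_linear k hk α hα (μ b), Ealpha_linear k hk α hα (μ c)]
  have hR : ∑ i, (α i / ∑ j, α j) * μ a i * μ b i * μ c i =
      (∑ i, μ a i * μ b i * μ c i * α i) / ∑ j, α j := by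
    rw [Finset.sum_div]
    exact Finset.sum_congr rfl fun i _ => by ring
  rw [hR]
  generalize ∑ i, α i = A at *
  have hA1 : A + 1 ≠ 0 := by positivity
  have hA2 : A + 2 ≠ 0 := by positivity
  field_simp
  ring
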